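/- Consider M nodes, where each node v has a convex, differentiable, L-smooth function f_v : ℝ^m → ℝ and a nonempty closed convex set S_v ⊆ ℝ^m. Let W = [w_{vu}] be an M×M real matrix with zero row sums, let μ > 0, let x* ∈ ∩_v S_v, and let n^v ∈ ∂I_{S_v}(x*) for each v. Suppose the sequences (x_n^v)_{n≥0} and (g_n^v)_{n≥0} in ℝ^m satisfy, for every n ≥ 0 and every v: z_n^v = x_n^v − Σ_{u=1}^M w_{vu} x_n^u − μ(∇f_v(x_n^v) − g_n^v) and x_{n+1}^v = P_{S_v}(z_n^v). Define F^v(w) := f_v(w) − f_v(x*) − ⟨∇f_v(x*), w − x*⟩, T^v(w) := −⟨n^v, w − x*⟩, x̃_n^v := x_n^v − x*, and g̃_n^v := g_n^v − ∇f_v(x*) − n^v. Then for every real η and every N ≥ 1: Σ_{n=0}^{N−1} [ μ Σ_v (F^v(x_{n+1}^v) + T^v(x_{n+1}^v)) + (η/2) Σ_{u,v} ‖x_{n+1}^u − x_{n+1}^v‖² ] ≤ Σ_{n=0}^{N−1} [ Σ_v ⟨x̃_{n+1}^v, x̃_n^v − Σ_u w_{vu} x̃_n^u − x̃_{n+1}^v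 + μ g̃_n^v⟩ + (Lμ/2) Σ_v ‖x̃_{n+1}^v − x̃_n^v‖² + (η/2) Σ_{u,v} ‖x̃_{n+1}^u − x̃_{n+1}^v‖² ]. -/

import Mathlib

/-!
The inequality already holds for each node and each iteration. Write `a`, `b` for the current and
next iterates of a node. The descent lemma for the `L`-smooth `f` (`descent_lemma`) between `a`
and `b`, combined with the gradient inequality for the convex `f` (`ConvexOn.gradient_inequality`)
between `a` and `xstar`, gives the three-point bound
`f b - f xstar ≤ ⟪∇f a, b - xstar⟫ + L / 2 * ‖b - a‖ ^ 2`.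
Testing the variational inequality of the projection against `xstar` bounds `μ ⟪∇f a, b - xstar⟫`
by the remaining inner products; the zero row sums of `W` allow replacing `x` by `x - xstar`
inside `∑ u, W v u • x n u`. The `η`-terms agree on both sides since
`(x u - xstar) - (x v - xstar) = x u - x v`.
-/

open scoped InnerProductSpace

section Smooth

variable {E : Type*} [NormedAddCommGroup E] [InnerProductSpace ℝ E] [CompleteSpace E]
  {f : E → ℝ} {f' : E → E}

lemma HasGradientAt.hasDerivAt_line (hdiff : ∀ w, HasGradientAt f (f' w) w) (a d : E) (t : ℝ) :
    HasDerivAt (fun s : ℝ => f (a + s • d)) ⟪f' (a + t • d), d⟫_ℝ t := by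
  have hline : HasDerivAt (fun s : ℝ => a + s • d) d t := by
    simpa using ((hasDerivAt_id t).smul_const d).const_add a
  have h := (hdiff (a + t • d)).hasFDerivAt.comp_hasDerivAt t hline
  rwa [InnerProductSpace.toDual_apply_apply] at h

/-- A convex function lies above its tangent planes. -/
lemma ConvexOn.gradient_inequality (hconv : ConvexOn ℝ Set.univ f)
    (hdiff : ∀ w, HasGradientAt f (f' w) w) (a y : E) :
    f a + ⟪f' a, y - a⟫_ℝ ≤ f y := by
  have hc : ConvexOn ℝ Set.univ (fun s : ℝ => f (a + s • (y - a))) := by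
    have h := hconv.comp_affineMap (AffineMap.lineMap (k := ℝ) a y)
    simpa [Function.comp_def, AffineMap.lineMap_apply, add_comm] using h
  have h := hc.le_slope_of_hasDerivAt (Set.mem_univ 0) (Set.mem_univ 1) one_pos
    (HasGradientAt.hasDerivAt_line hdiff a (y - a) 0)
  simp [slope_def_field] at h
  linarith

/-- The quadratic upper bound for a function with `L`-Lipschitz gradient. -/
lemma descent_lemma (hdiff : ∀ w, HasGradientAt f (f' w) w) {L : ℝ}
    (hLip : ∀ w w', ‖f' w - f' w'‖ ≤ L * ‖w - w'‖) (a b : E) :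
    f b ≤ f a + ⟪f' a, b - a⟫_ℝ + L / 2 * ‖b - a‖ ^ 2 := by
  set d := b - a with hd
  have hφ := HasGradientAt.hasDerivAt_line hdiff a d
  have hB : ∀ t : ℝ, HasDerivAt
      (fun s : ℝ => f a + s * ⟪f' a, d⟫_ℝ + s ^ 2 * (L / 2 * ‖d‖ ^ 2))
      (⟪f' a, d⟫_ℝ + L * t * ‖d‖ ^ 2) t := by
    intro t
    have h := (((hasDerivAt_id t).mul_const ⟪f' a, d⟫_ℝ).const_add (f a)).add
      ((hasDerivAt_pow 2 t).mul_const (L / 2 * ‖d‖ ^ 2))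
    refine h.congr_deriv ?_
    push_cast
    ring
  -- The derivative along the segment from `a` to `b` is dominated by that of the quadratic model.
  have hle : ∀ t ∈ Set.Ico (0 : ℝ) 1,
      ⟪f' (a + t • d), d⟫_ℝ ≤ ⟪f' a, d⟫_ℝ + L * t * ‖d‖ ^ 2 := by
    intro t ht
    have h1 := real_inner_le_norm (f' (a + t • d) - f' a) d
    have h2 := hLip (a + t • d) a
    rw [add_sub_cancel_left, norm_smul, Real.norm_of_nonneg ht.1] at h2
    rw [inner_sub_left] at h1
    nlinarith [mul_le_mul_of_nonneg_right h2 (norm_nonneg d)]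
  have key := image_le_of_deriv_right_le_deriv_boundary (a := (0 : ℝ)) (b := 1)
    (fun t _ => (hφ t).continuousAt.continuousWithinAt)
    (fun t _ => (hφ t).hasDerivWithinAt) (by simp)
    (fun t _ => (hB t).continuousAt.continuousWithinAt)
    (fun t _ => (hB t).hasDerivWithinAt) hle (Set.right_mem_Icc.2 zero_le_one)
  simpa [hd] using key

end Smooth

/-- master inequality (7') in Appendix B of the paper.
Summing the per-node, per-iteration DAGP inequality over all nodes `v` and
iterations `n = 0, …, N-1`, after adding and subtracting
`(η/2) ∑_{u,v} ‖x_{n+1}^u - x_{n+1}^v‖²`, yields the stated bound. -/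
theorem dagp_master_inequality (m M : ℕ)
    (f : Fin M → EuclideanSpace ℝ (Fin m) → ℝ)
    (f' : Fin M → EuclideanSpace ℝ (Fin m) → EuclideanSpace ℝ (Fin m))
    (hconv : ∀ v, ConvexOn ℝ Set.univ (f v))
    (hdiff : ∀ v w, HasGradientAt (f v) (f' v w) w)
    (L : ℝ) (hLip : ∀ v w w', ‖f' v w - f' v w'‖ ≤ L * ‖w - w'‖)
    (S : Fin M → Set (EuclideanSpace ℝ (Fin m)))
    (hSne : ∀ v, (S v).Nonempty) (hScl : ∀ v, IsClosed (S v))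
    (hScv : ∀ v, Convex ℝ (S v))
    (W : Matrix (Fin M) (Fin M) ℝ) (hWrow : ∀ v, ∑ u, W v u = 0)
    (μ : ℝ) (hμ : 0 < μ)
    (xstar : EuclideanSpace ℝ (Fin m)) (hxstar : ∀ v, xstar ∈ S v)
    (nv : Fin M → EuclideanSpace ℝ (Fin m))
    (hnv : ∀ v, ∀ y ∈ S v, ⟪nv v, y - xstar⟫_ℝ ≤ 0)
    (x g z : ℕ → Fin M → EuclideanSpace ℝ (Fin m))
    (hz : ∀ n v, z n v = x n v - (∑ u, W v u • x n u) - μ • (f' v (x n v) - g n v))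
    -- `x_{n+1}^v = P_{S_v}(z_n^v)`, via the projection variational characterization
    (hxS : ∀ n v, x (n + 1) v ∈ S v)
    (hproj : ∀ n v, ∀ y ∈ S v, ⟪y - x (n + 1) v, z n v - x (n + 1) v⟫_ℝ ≤ 0) :
    ∀ (η : ℝ) (N : ℕ), 1 ≤ N →
      ∑ n ∈ Finset.range N,
          (μ * ∑ v, ((f v (x (n + 1) v) - f v xstar
                        - ⟪f' v xstar, x (n + 1) v - xstar⟫_ℝ)
                      + (-⟪nv v, x (n + 1) v - xstar⟫_ℝ))
            + η / 2 * ∑ u, ∑ v, ‖x (n + 1) u - x (n + 1) v‖ ^ 2)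
        ≤
      ∑ n ∈ Finset.range N,
          ((∑ v, ⟪x (n + 1) v - xstar,
                (x n v - xstar) - (∑ u, W v u • (x n u - xstar))
                  - (x (n + 1) v - xstar)
                  + μ • (g n v - f' v xstar - nv v)⟫_ℝ)
            + L * μ / 2 * ∑ v, ‖(x (n + 1) v - xstar) - (x n v - xstar)‖ ^ 2
            + η / 2 * ∑ u, ∑ v,
                ‖(x (n + 1) u - xstar) - (x (n + 1) v - xstar)‖ ^ 2) := by
  intro η N _
  have node : ∀ n v,
      μ * ((f v (x (n + 1) v) - f v xstar - ⟪f' v xstar, x (n + 1) v - xstar⟫_ℝ)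
          + (-⟪nv v, x (n + 1) v - xstar⟫_ℝ))
        ≤ ⟪x (n + 1) v - xstar,
              (x n v - xstar) - (∑ u, W v u • (x n u - xstar)) - (x (n + 1) v - xstar)
                + μ • (g n v - f' v xstar - nv v)⟫_ℝ
          + L * μ / 2 * ‖(x (n + 1) v - xstar) - (x n v - xstar)‖ ^ 2 := by
    intro n v
    have hdesc := descent_lemma (hdiff v) (hLip v) (x n v) (x (n + 1) v)
    have hgrad := (hconv v).gradient_inequality (hdiff v) (x n v) xstar
    have hthree : f v (x (n + 1) v) - f v xstar
        ≤ ⟪f' v (x n v), x (n + 1) v - xstar⟫_ℝ + L / 2 * ‖x (n + 1) v - x n v‖ ^ 2 := by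
      simp only [inner_sub_right] at hdesc hgrad ⊢
      linarith
    have hp := hproj n v xstar (hxstar v)
    have hsum : ∑ u, W v u • (x n u - xstar) = ∑ u, W v u • x n u := by
      simp [smul_sub, Finset.sum_sub_distrib, ← Finset.sum_smul, hWrow v]
    have hdir : (x n v - xstar) - (∑ u, W v u • (x n u - xstar)) - (x (n + 1) v - xstar)
          + μ • (g n v - f' v xstar - nv v)
        = (z n v - x (n + 1) v) + μ • f' v (x n v) - μ • f' v xstar - μ • nv v := by
      rw [hsum, hz n v]
      module
    rw [hdir, sub_sub_sub_cancel_right]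
    rw [← neg_sub, inner_neg_left] at hp
    rw [← real_inner_comm] at hthree
    simp only [inner_add_right _ (_ - x (n + 1) v), inner_sub_right _ (_ + _),
      inner_sub_right _ (_ - μ • _), inner_smul_right,
      real_inner_comm (x (n + 1) v - xstar)]
    have := mul_le_mul_of_nonneg_left hthree hμ.le
    linarith
  refine Finset.sum_le_sum fun n _ => ?_
  simp only [sub_sub_sub_cancel_right _ _ xstar] at node ⊢
  rw [Finset.mul_sum, Finset.mul_sum (a := L * μ / 2), ← Finset.sum_add_distrib]
  gcongr with v
  exact node n v
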